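/- For every n ≥ 2, the word w = (b a^{n−1})^{n−2} b (that is, n−2 repetitions of the block consisting of one letter b followed by n−1 letters a, followed by one final letter b) is a reset word for the Černý automaton C_n: the induced map δ_w sends every state to 0. This word has length (n−1)². -/

import Mathlib

/-- The two-letter alphabet of the Černý automaton. -/
inductive Letter
  | a
  | b
deriving DecidableEq

/-- The action of a letter of the Černý automaton `C_n` on the state set `ZMod n`:
`a` sends `i` to `i + 1 (mod n)`, and `b` sends `n - 1` to `0` and fixes every other state. -/
def step (n : ℕ) : Letter → ZMod n → ZMod n
  | Letter.a, p => p + 1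
  | Letter.b, p => if p = -1 then 0 else p

/-- The map `δ_w` induced by a word `w`, applying letters left to right. -/
def run (n : ℕ) : List Letter → ZMod n → ZMod n
  | [], p => p
  | x :: w, p => run n w (step n x p)

/-- The word `(b a^{n-1})^{n-2} b`: `n - 2` repetitions of the block consisting of one
`b` followed by `n - 1` copies of `a`, followed by one final `b`. -/
def cernyWord (n : ℕ) : List Letter :=
  (List.replicate (n - 2) (Letter.b :: List.replicate (n - 1) Letter.a)).flatten ++ [Letter.b]

/-!
Write each state as `k - 1` with `0 ≤ k < n`. The block `b a^{n-1}` fixes the state `-1` and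
moves every other state back by one, so in these coordinates it lowers `k` by one and stops at `0`.
After `n - 2` blocks only `k = 0` and `k = 1` remain, that is the states `-1` and `0`,
and the final `b` merges these two.
-/

theorem run_append (n : ℕ) (u v : List Letter) (p : ZMod n) :
    run n (u ++ v) p = run n v (run n u p) := by
  induction u generalizing p with
  | nil => rfl
  | cons x _ ih => exact ih (step n x p)

theorem run_flatten_replicate (n m : ℕ) (w : List Letter) (p : ZMod n) :
    run n (List.replicate m w).flatten p = (run n w)^[m] p := by
  induction m generalizing p with
  | zero => rfl
  | succ m ih =>
    rw [List.replicate_succ, List.flatten_cons, run_append, ih, Function.iterate_succ_apply]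

theorem run_replicate_a (n k : ℕ) (p : ZMod n) :
    run n (List.replicate k Letter.a) p = p + k := by
  induction k generalizing p with
  | zero => simp [run]
  | succ k ih =>
    calc run n (List.replicate (k + 1) Letter.a) p
        = run n (List.replicate k Letter.a) (p + 1) := rfl
      _ = p + 1 + k := ih (p + 1)
      _ = p + (k + 1 : ℕ) := by push_cast; ring

/-- The block `b a^{n-1}` that is repeated in the word `cernyWord n`. -/
def cernyBlock (n : ℕ) : List Letter :=
  Letter.b :: List.replicate (n - 1) Letter.a

theorem run_cernyBlock {n : ℕ} [NeZero n] (p : ZMod n) :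
    run n (cernyBlock n) p = if p = -1 then -1 else p - 1 := by
  have cast_pred : ((n - 1 : ℕ) : ZMod n) = -1 := by
    rw [Nat.cast_pred (NeZero.pos n), ZMod.natCast_self, zero_sub]
  calc run n (cernyBlock n) p
      = step n Letter.b p + (n - 1 : ℕ) := run_replicate_a n (n - 1) (step n Letter.b p)
    _ = (if p = -1 then 0 else p) - 1 := by rw [cast_pred, ← sub_eq_add_neg, step]
    _ = if p = -1 then -1 else p - 1 := by rw [ite_sub, zero_sub]

-- The cast subtraction is truncated, so that `k = 0`, the state `-1`, stays fixed.
theorem run_cernyBlock_natCast_sub_one {n k : ℕ} (hk : k < n) :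
    run n (cernyBlock n) (k - 1) = ((k - 1 : ℕ) : ZMod n) - 1 := by
  have : NeZero n := ⟨by lia⟩
  rw [run_cernyBlock]
  obtain rfl | k_pos := Nat.eq_zero_or_pos k
  · simp
  · have k_ne_zero : (k : ZMod n) ≠ 0 := fun h =>
      Nat.not_dvd_of_pos_of_lt k_pos hk ((ZMod.natCast_eq_zero_iff k n).mp h)
    have not_fixed : (k : ZMod n) - 1 ≠ -1 := by
      rwa [Ne, sub_eq_neg_self]
    rw [if_neg not_fixed, Nat.cast_pred k_pos]

theorem iterate_run_cernyBlock {n k : ℕ} (hk : k < n) (m : ℕ) :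
    (run n (cernyBlock n))^[m] (k - 1) = ((k - m : ℕ) : ZMod n) - 1 := by
  induction m with
  | zero => rfl
  | succ m ih =>
    rw [Function.iterate_succ_apply', ih, run_cernyBlock_natCast_sub_one (by lia), Nat.sub_sub]

theorem run_cernyWord (n : ℕ) (p : ZMod n) :
    run n (cernyWord n) p = step n Letter.b ((run n (cernyBlock n))^[n - 2] p) := by
  rw [← run_flatten_replicate]
  exact run_append n _ [Letter.b] p

theorem step_b_natCast_sub_one (n : ℕ) {j : ℕ} (hj : j ≤ 1) :
    step n Letter.b (j - 1) = 0 := by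
  interval_cases j <;> simp [step]

theorem exists_eq_natCast_sub_one {n : ℕ} [NeZero n] (p : ZMod n) :
    ∃ k < n, p = k - 1 :=
  ⟨(p + 1).val, ZMod.val_lt (p + 1), by rw [ZMod.natCast_zmod_val, add_sub_cancel_right]⟩

theorem length_cernyWord {n : ℕ} (hn : 2 ≤ n) : (cernyWord n).length = (n - 1) ^ 2 := by
  obtain ⟨m, rfl⟩ := Nat.exists_eq_add_of_le' hn
  calc (cernyWord (m + 2)).length
      = m * (m + 2) + 1 := by simp [cernyWord]
    _ = (m + 1) ^ 2 := by ring

/-- For every `n ≥ 2`, the word `(b a^{n-1})^{n-2} b` is a reset word for the Černý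
automaton `C_n`: the induced map sends every state to `0`. Its length is `(n - 1)²`. -/
theorem cerny_word_is_reset (n : ℕ) (hn : 2 ≤ n) :
    (∀ p : ZMod n, run n (cernyWord n) p = 0) ∧
    (cernyWord n).length = (n - 1) ^ 2 := by
  refine ⟨fun p => ?_, length_cernyWord hn⟩
  have : NeZero n := ⟨by lia⟩
  obtain ⟨k, hk, rfl⟩ := exists_eq_natCast_sub_one p
  rw [run_cernyWord, iterate_run_cernyBlock hk]
  exact step_b_natCast_sub_one n (by lia)
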